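/- Let t > 0, λ > 0, η₁ > 1, η₂ > 0, p, q > 0 with p + q = 1, and let U be a probability density on (0,∞) such that U(x) = B₁·x^{−A₃}·exp{A₂·√(log x)}·(log x)^{κ}·(1 + O((log x)^{−1/2})) as x → ∞ and U(x) = B̃₁·x^{Ã₃}·exp{Ã₂·√(log(1/x))}·(log(1/x))^{κ}·(1 + O((log(1/x))^{−1/2})) as x → 0, where B₁, B̃₁ > 0, A₂, Ã₂ ∈ ℝ, κ ∈ ℝ, A₃ > 2, and −1 < Ã₃ < η₂ − 1. Define D(x) = e^{−λt}·U(x) + (U ⋆_M H(t,·))(x) for x > 0. Then D(x) = [e^{−λt} + m_{−Ã₃−1}(H(t,·))]·B̃₁·x^{Ã₃}·exp{Ã₂·√(log(1/x))}·(log(1/x))^{κ}·(1 + O((log(1/x))^{−1/2})) as x → 0, where m_{−Ã₃−1}(H(t,·)) = ∫_0^∞ x^{−Ã₃−1} H(t,x) dx < ∞. -/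

import Mathlib

open Filter Asymptotics MeasureTheory

/-- `P_{n,k}` from Kou's double exponential jump model: `P_{n,n} = p^n` and, for
`1 ≤ k ≤ n−1`,
`P_{n,k} = Σ_{i=k}^{n−1} C(n−k−1, i−k) C(n,i) (η₁/(η₁+η₂))^{i−k} (η₂/(η₁+η₂))^{n−i} p^i q^{n−i}`. -/
noncomputable def Pcoef (η₁ η₂ p q : ℝ) (n k : ℕ) : ℝ :=
  if k = n then p ^ n
  else ∑ i ∈ Finset.Ico k n,
    ((n - k - 1).choose (i - k) : ℝ) * (n.choose i : ℝ) *
      (η₁ / (η₁ + η₂)) ^ (i - k) * (η₂ / (η₁ + η₂)) ^ (n - i) * p ^ i * q ^ (n - i)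

/-- `Q_{n,k}` from Kou's double exponential jump model: `Q_{n,n} = q^n` and, for
`1 ≤ k ≤ n−1`,
`Q_{n,k} = Σ_{i=k}^{n−1} C(n−k−1, i−k) C(n,i) (η₁/(η₁+η₂))^{n−i} (η₂/(η₁+η₂))^{i−k} p^{n−i} q^i`. -/
noncomputable def Qcoef (η₁ η₂ p q : ℝ) (n k : ℕ) : ℝ :=
  if k = n then q ^ n
  else ∑ i ∈ Finset.Ico k n,
    ((n - k - 1).choose (i - k) : ℝ) * (n.choose i : ℝ) *
      (η₁ / (η₁ + η₂)) ^ (n - i) * (η₂ / (η₁ + η₂)) ^ (i - k) * p ^ (n - i) * q ^ i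

/-- The Poisson weights `π_n = e^{−λt} (λt)^n / n!`. -/
noncomputable def poisCoef (lam t : ℝ) (n : ℕ) : ℝ :=
  Real.exp (-(lam * t)) * (lam * t) ^ n / (n.factorial : ℝ)

/-- `a_k = (η₁^{k+1}/k!) Σ_{n=k+1}^∞ π_n P_{n,k+1}` (the series is reindexed by
`n = m + (k+1)`, `m ≥ 0`). -/
noncomputable def aCoef (lam t η₁ η₂ p q : ℝ) (k : ℕ) : ℝ :=
  η₁ ^ (k + 1) / (k.factorial : ℝ) *
    ∑' m : ℕ, poisCoef lam t (m + (k + 1)) * Pcoef η₁ η₂ p q (m + (k + 1)) (k + 1)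

/-- `b_k = (η₂^{k+1}/k!) Σ_{n=k+1}^∞ π_n Q_{n,k+1}` (the series is reindexed by
`n = m + (k+1)`, `m ≥ 0`). -/
noncomputable def bCoef (lam t η₁ η₂ p q : ℝ) (k : ℕ) : ℝ :=
  η₂ ^ (k + 1) / (k.factorial : ℝ) *
    ∑' m : ℕ, poisCoef lam t (m + (k + 1)) * Qcoef η₁ η₂ p q (m + (k + 1)) (k + 1)

/-- `G₁(t,u) = Σ_{k=0}^∞ a_k u^k`. -/
noncomputable def G1 (lam t η₁ η₂ p q : ℝ) (u : ℝ) : ℝ :=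
  ∑' k : ℕ, aCoef lam t η₁ η₂ p q k * u ^ k

/-- `G₂(t,−u) = Σ_{k=0}^∞ b_k u^k`; `G2m lam t η₁ η₂ p q u` stands for `G₂(t,−u)`. -/
noncomputable def G2m (lam t η₁ η₂ p q : ℝ) (u : ℝ) : ℝ :=
  ∑' k : ℕ, bCoef lam t η₁ η₂ p q k * u ^ k

/-- `H₁(t,x) = G₁(t, log x)` for `x > 1`. -/
noncomputable def H1fun (lam t η₁ η₂ p q : ℝ) (x : ℝ) : ℝ :=
  G1 lam t η₁ η₂ p q (Real.log x)

/-- `H₂(t,x) = G₂(t, log x) = G2m(t, log(1/x))` for `0 < x < 1`. -/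
noncomputable def H2fun (lam t η₁ η₂ p q : ℝ) (x : ℝ) : ℝ :=
  G2m lam t η₁ η₂ p q (Real.log x⁻¹)

/-- The density of the absolutely continuous part of the law of the exponential compound
Poisson factor: `H(t,x) = H₁(t,x) x^{−η₁−1}` for `x > 1` and `H(t,x) = H₂(t,x) x^{η₂−1}`
for `0 < x < 1`. -/
noncomputable def Hfun (lam t η₁ η₂ p q : ℝ) (x : ℝ) : ℝ :=
  if 1 < x then H1fun lam t η₁ η₂ p q x * x ^ (-η₁ - 1)
  else H2fun lam t η₁ η₂ p q x * x ^ (η₂ - 1)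

/-- The Mellin convolution of two measurable functions on `(0,∞)`:
`f ⋆_M g (x) = ∫_0^∞ f(x/t) g(t) dt/t`. -/
noncomputable def mellinConv (f g : ℝ → ℝ) (x : ℝ) : ℝ :=
  ∫ t in Set.Ioi (0:ℝ), f (x / t) * g t / t

/-!
Substituting `x = e^{-L}`, the profile `exp(A √(log (1/x))) (log (1/x))^κ` becomes
`ψ(L) = exp(A √L) L^κ`, which satisfies `|log ψ(M) - log ψ(L)| ≤ C |M - L| / √L`. So
`ψ(L + log y) = ψ(L) (1 + O(L^{-1/2} e^{ε |log y|}))` uniformly in `y`, as long as `x/y` stays near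
zero. Inserted into `∫ U(x/y) H(y) dy/y`, the main term `x^a y^{-a} ψ(L)` produces the moment
`∫ y^{-a-1} H(y) dy`, and the weight `y^{±ε}` is absorbed because `H` has moments of order
slightly larger and slightly smaller. On the remaining range `y < x/δ` only the integrability of `U`
is needed: there `H(y) = O(y^b)` with `b > a`, which contributes `O(x^b)`.

The required decay of `H` holds because the power series `G₁` and `G₂` have coefficients
`O(r^k/k!)` for every `r > 0`, hence grow more slowly than every exponential, so that `H` is
`x^{-η₁-1}` and `x^{η₂-1}` up to arbitrarily small powers.
-/

/-! ### Kou's coefficients -/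

section KouCoefficients

variable {lam t η₁ η₂ p q : ℝ}

lemma Qcoef_eq_Pcoef_swap (η₁ η₂ p q : ℝ) (n k : ℕ) :
    Qcoef η₁ η₂ p q n k = Pcoef η₂ η₁ q p n k := by
  unfold Qcoef Pcoef
  rw [add_comm η₂ η₁]
  congr! 2
  ring

lemma G2m_eq_G1_swap (lam t η₁ η₂ p q : ℝ) :
    G2m lam t η₁ η₂ p q = G1 lam t η₂ η₁ q p := by
  funext u
  simp only [G2m, G1, bCoef, aCoef, Qcoef_eq_Pcoef_swap]

lemma Pcoef_nonneg (hη₁ : 0 ≤ η₁) (hη₂ : 0 ≤ η₂) (hp : 0 ≤ p) (hq : 0 ≤ q) (n k : ℕ) :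
    0 ≤ Pcoef η₁ η₂ p q n k := by
  unfold Pcoef
  split_ifs
  · positivity
  · exact Finset.sum_nonneg fun i _ => by positivity

lemma sum_Ico_choose_mul_choose_le_four_pow (n k : ℕ) :
    ∑ i ∈ Finset.Ico k n, ((n - k - 1).choose (i - k) : ℝ) * (n.choose i : ℝ) ≤ 4 ^ n := by
  have choose_le (i : ℕ) : (n - k - 1).choose (i - k) ≤ 2 ^ n :=
    (Nat.choose_le_two_pow _ _).trans (Nat.pow_le_pow_right two_pos (by omega))
  have hsub : Finset.Ico k n ⊆ Finset.range (n + 1) := fun i => by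
    simp only [Finset.mem_Ico, Finset.mem_range]; omega
  have hnat : ∑ i ∈ Finset.Ico k n, (n - k - 1).choose (i - k) * n.choose i ≤ 4 ^ n :=
    calc ∑ i ∈ Finset.Ico k n, (n - k - 1).choose (i - k) * n.choose i
        ≤ ∑ i ∈ Finset.Ico k n, 2 ^ n * n.choose i := by gcongr with i; exact choose_le i
      _ ≤ ∑ i ∈ Finset.range (n + 1), 2 ^ n * n.choose i := Finset.sum_le_sum_of_subset hsub
      _ = 4 ^ n := by rw [← Finset.mul_sum, Nat.sum_range_choose, ← mul_pow]; norm_num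
  exact_mod_cast hnat

lemma Pcoef_le_four_pow (hη₁ : 0 ≤ η₁) (hη₂ : 0 ≤ η₂) (hp : p ∈ Set.Icc 0 1)
    (hq : q ∈ Set.Icc 0 1) (n k : ℕ) : Pcoef η₁ η₂ p q n k ≤ 4 ^ n := by
  obtain ⟨hp₀, hp₁⟩ := hp
  obtain ⟨hq₀, hq₁⟩ := hq
  unfold Pcoef
  split_ifs
  · exact (pow_le_one₀ hp₀ hp₁).trans (one_le_pow₀ (by norm_num))
  have hw₁ : η₁ / (η₁ + η₂) ≤ 1 := div_le_one_of_le₀ (by linarith) (by positivity)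
  have hw₂ : η₂ / (η₁ + η₂) ≤ 1 := div_le_one_of_le₀ (by linarith) (by positivity)
  refine (Finset.sum_le_sum fun i _ => ?_).trans (sum_Ico_choose_mul_choose_le_four_pow n k)
  calc _ ≤ ((n - k - 1).choose (i - k) : ℝ) * (n.choose i : ℝ) * 1 ^ (i - k) * 1 ^ (n - i) *
          1 ^ i * 1 ^ (n - i) := by gcongr
    _ = _ := by simp only [one_pow, mul_one]

lemma poisCoef_nonneg (hlt : 0 ≤ lam * t) (n : ℕ) : 0 ≤ poisCoef lam t n := by
  unfold poisCoef; positivity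

lemma poisCoef_le (hlt : 0 ≤ lam * t) (n : ℕ) :
    poisCoef lam t n ≤ (lam * t) ^ n / n.factorial := by
  rw [poisCoef, mul_div_assoc]
  exact mul_le_of_le_one_left (by positivity) (Real.exp_le_one_iff.2 (by linarith))

lemma tsum_pow_div_factorial (x : ℝ) : ∑' n : ℕ, x ^ n / n.factorial = Real.exp x := by
  rw [Real.exp_eq_exp_ℝ, NormedSpace.exp_eq_tsum_div]

lemma summable_pow_add_div_factorial (x : ℝ) (k : ℕ) :
    Summable fun m : ℕ => x ^ (m + k) / (m + k).factorial :=
  (summable_nat_add_iff k).2 (Real.summable_pow_div_factorial x)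

lemma tsum_pow_add_div_factorial_le {x r : ℝ} (hx : 0 ≤ x) (hr₀ : 0 < r) (hr₁ : r ≤ 1) (k : ℕ) :
    ∑' m : ℕ, x ^ (m + k) / (m + k).factorial ≤ r ^ k * Real.exp (x / r) := by
  have hterm (m : ℕ) : x ^ (m + k) / (m + k).factorial ≤
      r ^ k * ((x / r) ^ (m + k) / (m + k).factorial) :=
    calc x ^ (m + k) / (m + k).factorial
        = r ^ (m + k) * ((x / r) ^ (m + k) / (m + k).factorial) := by rw [div_pow]; field_simp
      _ ≤ r ^ k * ((x / r) ^ (m + k) / (m + k).factorial) := by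
        gcongr ?_ * _
        exact pow_le_pow_of_le_one hr₀.le hr₁ (Nat.le_add_left k m)
  calc ∑' m : ℕ, x ^ (m + k) / (m + k).factorial
      ≤ ∑' m : ℕ, r ^ k * ((x / r) ^ (m + k) / (m + k).factorial) :=
        (summable_pow_add_div_factorial x k).tsum_le_tsum hterm
          ((summable_pow_add_div_factorial (x / r) k).mul_left _)
    _ = r ^ k * ∑' m : ℕ, (x / r) ^ (m + k) / (m + k).factorial := tsum_mul_left
    _ ≤ r ^ k * ∑' n : ℕ, (x / r) ^ n / n.factorial := by
        gcongr ?_ * ?_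
        rw [← (Real.summable_pow_div_factorial (x / r)).sum_add_tsum_nat_add k]
        exact le_add_of_nonneg_left (Finset.sum_nonneg fun i _ => by positivity)
    _ = r ^ k * Real.exp (x / r) := by rw [tsum_pow_div_factorial]

lemma aCoef_nonneg (hlt : 0 ≤ lam * t) (hη₁ : 0 ≤ η₁) (hη₂ : 0 ≤ η₂) (hp : 0 ≤ p) (hq : 0 ≤ q)
    (k : ℕ) : 0 ≤ aCoef lam t η₁ η₂ p q k :=
  mul_nonneg (by positivity) <| tsum_nonneg fun _ =>
    mul_nonneg (poisCoef_nonneg hlt _) (Pcoef_nonneg hη₁ hη₂ hp hq _ _)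

-- Summing the Poisson tail against the weights `r ^ (k + 1)` gains an arbitrary geometric factor,
-- which is why `G1` grows more slowly than every exponential.
lemma aCoef_le (hlt : 0 ≤ lam * t) (hη₁ : 0 ≤ η₁) (hη₂ : 0 ≤ η₂) (hp : p ∈ Set.Icc 0 1)
    (hq : q ∈ Set.Icc 0 1) {r : ℝ} (hr₀ : 0 < r) (hr₁ : r ≤ 1) (k : ℕ) :
    aCoef lam t η₁ η₂ p q k ≤
      η₁ * Real.exp (4 * (lam * t) / r) * ((η₁ * r) ^ k / k.factorial) := by
  have hterm (m : ℕ) :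
      poisCoef lam t (m + (k + 1)) * Pcoef η₁ η₂ p q (m + (k + 1)) (k + 1) ≤
        (4 * (lam * t)) ^ (m + (k + 1)) / (m + (k + 1)).factorial :=
    calc _ ≤ (lam * t) ^ (m + (k + 1)) / (m + (k + 1)).factorial * 4 ^ (m + (k + 1)) :=
          mul_le_mul (poisCoef_le hlt _) (Pcoef_le_four_pow hη₁ hη₂ hp hq _ _)
            (Pcoef_nonneg hη₁ hη₂ hp.1 hq.1 _ _) (by positivity)
      _ = _ := by rw [mul_pow 4]; ring
  have hmajorant := summable_pow_add_div_factorial (4 * (lam * t)) (k + 1)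
  have hnonneg (m : ℕ) :
      0 ≤ poisCoef lam t (m + (k + 1)) * Pcoef η₁ η₂ p q (m + (k + 1)) (k + 1) :=
    mul_nonneg (poisCoef_nonneg hlt _) (Pcoef_nonneg hη₁ hη₂ hp.1 hq.1 _ _)
  calc aCoef lam t η₁ η₂ p q k
      ≤ η₁ ^ (k + 1) / k.factorial * (r ^ (k + 1) * Real.exp (4 * (lam * t) / r)) := by
        unfold aCoef
        gcongr
        exact ((hmajorant.of_nonneg_of_le hnonneg hterm).tsum_le_tsum hterm hmajorant).trans
          (tsum_pow_add_div_factorial_le (by positivity) hr₀ hr₁ _)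
    _ ≤ η₁ ^ (k + 1) / k.factorial * (r ^ k * Real.exp (4 * (lam * t) / r)) := by
        gcongr ?_ * (?_ * ?_)
        exact pow_le_pow_of_le_one hr₀.le hr₁ k.le_succ
    _ = η₁ * Real.exp (4 * (lam * t) / r) * ((η₁ * r) ^ k / k.factorial) := by
        rw [mul_pow, pow_succ]; ring

lemma aCoef_mul_pow_le (hlt : 0 ≤ lam * t) (hη₁ : 0 ≤ η₁) (hη₂ : 0 ≤ η₂) (hp : p ∈ Set.Icc 0 1)
    (hq : q ∈ Set.Icc 0 1) {r u : ℝ} (hr₀ : 0 < r) (hr₁ : r ≤ 1) (hu : 0 ≤ u) (k : ℕ) :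
    aCoef lam t η₁ η₂ p q k * u ^ k ≤
      η₁ * Real.exp (4 * (lam * t) / r) * ((η₁ * r * u) ^ k / k.factorial) :=
  calc aCoef lam t η₁ η₂ p q k * u ^ k
      ≤ η₁ * Real.exp (4 * (lam * t) / r) * ((η₁ * r) ^ k / k.factorial) * u ^ k :=
        mul_le_mul_of_nonneg_right (aCoef_le hlt hη₁ hη₂ hp hq hr₀ hr₁ k) (by positivity)
    _ = η₁ * Real.exp (4 * (lam * t) / r) * ((η₁ * r * u) ^ k / k.factorial) := by
        rw [mul_pow _ u]; ring

lemma summable_aCoef_mul_pow (hlt : 0 ≤ lam * t) (hη₁ : 0 ≤ η₁) (hη₂ : 0 ≤ η₂)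
    (hp : p ∈ Set.Icc 0 1) (hq : q ∈ Set.Icc 0 1) (u : ℝ) :
    Summable fun k => aCoef lam t η₁ η₂ p q k * u ^ k := by
  refine .of_norm_bounded ((Real.summable_pow_div_factorial (η₁ * 1 * |u|)).mul_left
    (η₁ * Real.exp (4 * (lam * t) / 1))) fun k => ?_
  rw [norm_mul, norm_pow, Real.norm_of_nonneg (aCoef_nonneg hlt hη₁ hη₂ hp.1 hq.1 k),
    Real.norm_eq_abs]
  exact aCoef_mul_pow_le hlt hη₁ hη₂ hp hq one_pos le_rfl (abs_nonneg u) k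

lemma measurable_G1 (hlt : 0 ≤ lam * t) (hη₁ : 0 ≤ η₁) (hη₂ : 0 ≤ η₂) (hp : p ∈ Set.Icc 0 1)
    (hq : q ∈ Set.Icc 0 1) : Measurable (G1 lam t η₁ η₂ p q) := by
  refine measurable_of_tendsto_metrizable
    (f := fun n u => ∑ k ∈ Finset.range n, aCoef lam t η₁ η₂ p q k * u ^ k)
    (fun n => by fun_prop) (tendsto_pi_nhds.2 fun u => ?_)
  exact (summable_aCoef_mul_pow hlt hη₁ hη₂ hp hq u).hasSum.tendsto_sum_nat

lemma G1_nonneg (hlt : 0 ≤ lam * t) (hη₁ : 0 ≤ η₁) (hη₂ : 0 ≤ η₂) (hp : 0 ≤ p) (hq : 0 ≤ q)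
    {u : ℝ} (hu : 0 ≤ u) : 0 ≤ G1 lam t η₁ η₂ p q u :=
  tsum_nonneg fun k => mul_nonneg (aCoef_nonneg hlt hη₁ hη₂ hp hq k) (by positivity)

lemma exists_G1_le_mul_exp (hlt : 0 ≤ lam * t) (hη₁ : 0 < η₁) (hη₂ : 0 ≤ η₂)
    (hp : p ∈ Set.Icc 0 1) (hq : q ∈ Set.Icc 0 1) {ε : ℝ} (hε : 0 < ε) :
    ∃ C, ∀ u, 0 ≤ u → G1 lam t η₁ η₂ p q u ≤ C * Real.exp (ε * u) := by
  obtain ⟨r, hr₀, hr⟩ : ∃ r, 0 < r ∧ r ≤ min 1 (ε / η₁) := ⟨min 1 (ε / η₁), by positivity, le_rfl⟩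
  obtain ⟨hr₁, hrε⟩ := le_min_iff.1 hr
  rw [le_div_iff₀' hη₁] at hrε
  refine ⟨η₁ * Real.exp (4 * (lam * t) / r), fun u hu => ?_⟩
  calc G1 lam t η₁ η₂ p q u
      ≤ ∑' k : ℕ, η₁ * Real.exp (4 * (lam * t) / r) * ((η₁ * r * u) ^ k / k.factorial) :=
        (summable_aCoef_mul_pow hlt hη₁.le hη₂ hp hq u).tsum_le_tsum
          (aCoef_mul_pow_le hlt hη₁.le hη₂ hp hq hr₀ hr₁ hu)
          ((Real.summable_pow_div_factorial _).mul_left _)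
    _ = η₁ * Real.exp (4 * (lam * t) / r) * Real.exp (η₁ * r * u) := by
        rw [tsum_mul_left, tsum_pow_div_factorial]
    _ ≤ η₁ * Real.exp (4 * (lam * t) / r) * Real.exp (ε * u) := by gcongr

end KouCoefficients

/-! ### The density of the jump factor -/

section JumpDensity

variable {lam t η₁ η₂ p q : ℝ}

lemma Hfun_of_one_lt {y : ℝ} (hy : 1 < y) :
    Hfun lam t η₁ η₂ p q y = G1 lam t η₁ η₂ p q (Real.log y) * y ^ (-η₁ - 1) := by
  rw [Hfun, if_pos hy, H1fun]

lemma Hfun_of_le_one {y : ℝ} (hy : y ≤ 1) :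
    Hfun lam t η₁ η₂ p q y = G1 lam t η₂ η₁ q p (Real.log y⁻¹) * y ^ (η₂ - 1) := by
  rw [Hfun, if_neg hy.not_gt, H2fun, G2m_eq_G1_swap]

lemma measurable_Hfun (hlt : 0 ≤ lam * t) (hη₁ : 0 ≤ η₁) (hη₂ : 0 ≤ η₂) (hp : p ∈ Set.Icc 0 1)
    (hq : q ∈ Set.Icc 0 1) : Measurable (Hfun lam t η₁ η₂ p q) := by
  refine Measurable.ite measurableSet_Ioi
    (((measurable_G1 hlt hη₁ hη₂ hp hq).comp Real.measurable_log).mul (by fun_prop))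
    (Measurable.mul ?_ (by fun_prop))
  change Measurable fun y => G2m lam t η₁ η₂ p q (Real.log y⁻¹)
  rw [G2m_eq_G1_swap]
  exact (measurable_G1 hlt hη₂ hη₁ hq hp).comp (Real.measurable_log.comp measurable_inv)

lemma Hfun_nonneg (hlt : 0 ≤ lam * t) (hη₁ : 0 ≤ η₁) (hη₂ : 0 ≤ η₂) (hp : 0 ≤ p) (hq : 0 ≤ q)
    {y : ℝ} (hy : 0 < y) : 0 ≤ Hfun lam t η₁ η₂ p q y := by
  rcases lt_or_ge 1 y with h | h
  · rw [Hfun_of_one_lt h]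
    exact mul_nonneg (G1_nonneg hlt hη₁ hη₂ hp hq (Real.log_nonneg h.le)) (by positivity)
  · rw [Hfun_of_le_one h]
    exact mul_nonneg (G1_nonneg hlt hη₂ hη₁ hq hp (Real.log_nonneg ((one_le_inv₀ hy).2 h)))
      (by positivity)

lemma exists_Hfun_le_rpow_of_one_lt (hlt : 0 ≤ lam * t) (hη₁ : 0 < η₁) (hη₂ : 0 ≤ η₂)
    (hp : p ∈ Set.Icc 0 1) (hq : q ∈ Set.Icc 0 1) {c : ℝ} (hc : c < η₁ + 1) :
    ∃ C, ∀ y, 1 < y → Hfun lam t η₁ η₂ p q y ≤ C * y ^ (-c) := by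
  obtain ⟨C, hC⟩ := exists_G1_le_mul_exp hlt hη₁ hη₂ hp hq (sub_pos.2 hc)
  refine ⟨C, fun y hy => ?_⟩
  have hy₀ : 0 < y := one_pos.trans hy
  calc Hfun lam t η₁ η₂ p q y
      ≤ C * Real.exp ((η₁ + 1 - c) * Real.log y) * y ^ (-η₁ - 1) := by
        rw [Hfun_of_one_lt hy]
        gcongr
        exact hC _ (Real.log_nonneg hy.le)
    _ = C * y ^ (-c) := by
        rw [mul_comm (_ - _), ← Real.rpow_def_of_pos hy₀, mul_assoc, ← Real.rpow_add hy₀]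
        ring_nf

lemma exists_Hfun_le_rpow_of_le_one (hlt : 0 ≤ lam * t) (hη₁ : 0 ≤ η₁) (hη₂ : 0 < η₂)
    (hp : p ∈ Set.Icc 0 1) (hq : q ∈ Set.Icc 0 1) {b : ℝ} (hb : b < η₂ - 1) :
    ∃ C, ∀ y, 0 < y → y ≤ 1 → Hfun lam t η₁ η₂ p q y ≤ C * y ^ b := by
  obtain ⟨C, hC⟩ := exists_G1_le_mul_exp hlt hη₂ hη₁ hq hp (sub_pos.2 hb)
  refine ⟨C, fun y hy₀ hy => ?_⟩
  calc Hfun lam t η₁ η₂ p q y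
      ≤ C * Real.exp ((η₂ - 1 - b) * Real.log y⁻¹) * y ^ (η₂ - 1) := by
        rw [Hfun_of_le_one hy]
        gcongr
        exact hC _ (Real.log_nonneg ((one_le_inv₀ hy₀).2 hy))
    _ = C * y ^ b := by
        rw [mul_comm (_ - _), ← Real.rpow_def_of_pos (inv_pos.2 hy₀), Real.inv_rpow hy₀.le,
          ← Real.rpow_neg hy₀.le, mul_assoc, ← Real.rpow_add hy₀]
        ring_nf

lemma Hfun_isBigO_atTop (hlt : 0 ≤ lam * t) (hη₁ : 0 < η₁) (hη₂ : 0 ≤ η₂)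
    (hp : p ∈ Set.Icc 0 1) (hq : q ∈ Set.Icc 0 1) {c : ℝ} (hc : c < η₁ + 1) :
    Hfun lam t η₁ η₂ p q =O[atTop] fun y => y ^ (-c) := by
  obtain ⟨C, hC⟩ := exists_Hfun_le_rpow_of_one_lt hlt hη₁ hη₂ hp hq hc
  refine .of_bound C ?_
  filter_upwards [eventually_gt_atTop 1] with y hy
  have hy₀ : 0 < y := one_pos.trans hy
  rw [Real.norm_of_nonneg (Hfun_nonneg hlt hη₁.le hη₂ hp.1 hq.1 hy₀),
    Real.norm_of_nonneg (by positivity)]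
  exact hC y hy

lemma Hfun_isBigO_zero (hlt : 0 ≤ lam * t) (hη₁ : 0 ≤ η₁) (hη₂ : 0 < η₂)
    (hp : p ∈ Set.Icc 0 1) (hq : q ∈ Set.Icc 0 1) {b : ℝ} (hb : b < η₂ - 1) :
    Hfun lam t η₁ η₂ p q =O[nhdsWithin 0 (Set.Ioi 0)] fun y => y ^ b := by
  obtain ⟨C, hC⟩ := exists_Hfun_le_rpow_of_le_one hlt hη₁ hη₂ hp hq hb
  refine .of_bound C ?_
  filter_upwards [Ioc_mem_nhdsGT one_pos] with y ⟨hy₀, hy₁⟩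
  rw [Real.norm_of_nonneg (Hfun_nonneg hlt hη₁ hη₂.le hp.1 hq.1 hy₀),
    Real.norm_of_nonneg (by positivity)]
  exact hC y hy₀ hy₁

lemma locallyIntegrableOn_Hfun (hlt : 0 ≤ lam * t) (hη₁ : 0 < η₁) (hη₂ : 0 < η₂)
    (hp : p ∈ Set.Icc 0 1) (hq : q ∈ Set.Icc 0 1) :
    LocallyIntegrableOn (Hfun lam t η₁ η₂ p q) (Set.Ioi 0) := by
  obtain ⟨C₁, hC₁⟩ := exists_Hfun_le_rpow_of_one_lt hlt hη₁ hη₂.le hp hq (c := 0) (by linarith)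
  obtain ⟨C₂, hC₂⟩ := exists_Hfun_le_rpow_of_le_one hlt hη₁.le hη₂ hp hq (b := -1) (by linarith)
  have hmajorant : ContinuousOn (fun y : ℝ => |C₁| + |C₂| * y⁻¹) (Set.Ioi 0) :=
    continuousOn_const.add (continuousOn_const.mul (continuousOn_inv₀.mono fun _ h => ne_of_gt h))
  rw [locallyIntegrableOn_iff isOpen_Ioi.isLocallyClosed]
  intro K hK hKc
  refine ((hmajorant.mono hK).integrableOn_compact hKc).mono'
    (measurable_Hfun hlt hη₁.le hη₂.le hp hq).aestronglyMeasurable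
    ((ae_restrict_iff' hKc.measurableSet).2 (.of_forall fun y hyK => ?_))
  have hy₀ : 0 < y := hK hyK
  rw [Real.norm_of_nonneg (Hfun_nonneg hlt hη₁.le hη₂.le hp.1 hq.1 hy₀)]
  rcases lt_or_ge 1 y with hy | hy
  · calc Hfun lam t η₁ η₂ p q y ≤ C₁ := by simpa using hC₁ y hy
      _ ≤ |C₁| + |C₂| * y⁻¹ := (le_abs_self C₁).trans (le_add_of_nonneg_right (by positivity))
  · calc Hfun lam t η₁ η₂ p q y ≤ C₂ * y⁻¹ := by simpa [Real.rpow_neg_one] using hC₂ y hy₀ hy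
      _ ≤ |C₂| * y⁻¹ := by gcongr; exact le_abs_self C₂
      _ ≤ |C₁| + |C₂| * y⁻¹ := le_add_of_nonneg_left (abs_nonneg C₁)

end JumpDensity

/-! ### Slow variation of the Heston profile -/

section LogProfile

/-- The factor `exp(A √L) L^κ` of the Heston asymptotics, as a function of `L = log (1/x)`. -/
noncomputable def logProfile (A κ L : ℝ) : ℝ :=
  Real.exp (A * √L) * L ^ κ

variable {A κ L M : ℝ}

lemma logProfile_pos (A κ : ℝ) (hL : 0 < L) : 0 < logProfile A κ L := by
  unfold logProfile; positivity

lemma logProfile_mul_rpow (A κ s : ℝ) (hL : 0 < L) :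
    logProfile A κ L * L ^ s = logProfile A (κ + s) L := by
  rw [logProfile, logProfile, Real.rpow_add hL, mul_assoc]

lemma log_logProfile (A κ : ℝ) (hL : 0 < L) :
    Real.log (logProfile A κ L) = A * √L + κ * Real.log L := by
  rw [logProfile, Real.log_mul (Real.exp_pos _).ne' (by positivity), Real.log_exp,
    Real.log_rpow hL]

lemma abs_sqrt_sub_sqrt_le (hL : 0 < L) (hM : 0 ≤ M) : |√M - √L| ≤ |M - L| / √L := by
  have hdiff : |M - L| = |√M - √L| * (√M + √L) := by
    rw [← abs_of_nonneg (by positivity : 0 ≤ √M + √L), ← abs_mul]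
    congr 1
    linear_combination Real.sq_sqrt hL.le - Real.sq_sqrt hM
  rw [le_div_iff₀ (Real.sqrt_pos.2 hL), hdiff]
  gcongr
  exact le_add_of_nonneg_left (Real.sqrt_nonneg M)

lemma abs_log_sub_log_le {x y : ℝ} (hx : 1 ≤ x) (hy : 1 ≤ y) :
    |Real.log x - Real.log y| ≤ |x - y| := by
  wlog h : y ≤ x generalizing x y
  · rw [abs_sub_comm, abs_sub_comm x]
    exact this hy hx (le_of_not_ge h)
  have hy₀ : 0 < y := one_pos.trans_le hy
  rw [abs_of_nonneg (sub_nonneg.2 (Real.log_le_log hy₀ h)), abs_of_nonneg (sub_nonneg.2 h),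
    ← Real.log_div (hy₀.trans_le h).ne' hy₀.ne']
  calc Real.log (x / y) ≤ x / y - 1 := Real.log_le_sub_one_of_pos (by positivity)
    _ = (x - y) / y := by rw [sub_div, div_self hy₀.ne']
    _ ≤ x - y := div_le_self (sub_nonneg.2 h) hy

lemma abs_log_logProfile_sub_le (A κ : ℝ) (hL : 1 ≤ L) (hM : 1 ≤ M) :
    |Real.log (logProfile A κ M) - Real.log (logProfile A κ L)| ≤
      (|A| + 2 * |κ|) * (|M - L| / √L) := by
  have hL₀ : 0 < L := one_pos.trans_le hL
  have hM₀ : 0 < M := one_pos.trans_le hM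
  have hsqrt := abs_sqrt_sub_sqrt_le hL₀ hM₀.le
  have hlog : |Real.log (√M) - Real.log (√L)| ≤ |M - L| / √L :=
    (abs_log_sub_log_le (Real.one_le_sqrt.2 hM) (Real.one_le_sqrt.2 hL)).trans hsqrt
  calc |Real.log (logProfile A κ M) - Real.log (logProfile A κ L)|
      = |A * (√M - √L) + 2 * κ * (Real.log (√M) - Real.log (√L))| := by
        rw [log_logProfile A κ hL₀, log_logProfile A κ hM₀, Real.log_sqrt hM₀.le,
          Real.log_sqrt hL₀.le]
        ring_nf
    _ ≤ |A| * |√M - √L| + 2 * |κ| * |Real.log (√M) - Real.log (√L)| := by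
        refine (abs_add_le _ _).trans_eq ?_
        rw [abs_mul, abs_mul, abs_mul, abs_two]
    _ ≤ (|A| + 2 * |κ|) * (|M - L| / √L) := by
        rw [add_mul]
        gcongr

lemma abs_exp_sub_one_le_mul_exp_abs (r : ℝ) : |Real.exp r - 1| ≤ |r| * Real.exp |r| := by
  have h := Complex.norm_exp_sub_sum_le_norm_mul_exp r 1
  simp only [Finset.sum_range_one, pow_zero, Nat.factorial_zero, Nat.cast_one, div_one, pow_one,
    Complex.norm_real, Real.norm_eq_abs] at h
  exact_mod_cast h

lemma le_inv_mul_exp_mul {ε : ℝ} (hε : 0 < ε) (u : ℝ) : u ≤ ε⁻¹ * Real.exp (ε * u) := by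
  rw [← div_eq_inv_mul, le_div_iff₀' hε]
  exact (lt_add_one _).le.trans (Real.add_one_le_exp _)

lemma eventually_abs_log_logProfile_sub_le (A κ : ℝ) {ε : ℝ} (hε : 0 < ε) :
    ∀ᶠ L in atTop, ∀ M, 1 ≤ M →
      |Real.log (logProfile A κ M) - Real.log (logProfile A κ L)| ≤ ε * |M - L| := by
  have hsmall : Tendsto (fun L : ℝ => (|A| + 2 * |κ|) / √L) atTop (nhds 0) :=
    tendsto_const_nhds.div_atTop Real.tendsto_sqrt_atTop
  filter_upwards [hsmall.eventually_le_const hε, eventually_ge_atTop 1] with L hLε hL M hM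
  calc _ ≤ (|A| + 2 * |κ|) * (|M - L| / √L) := abs_log_logProfile_sub_le A κ hL hM
    _ = (|A| + 2 * |κ|) / √L * |M - L| := by ring
    _ ≤ ε * |M - L| := by gcongr

lemma eventually_logProfile_le (A κ : ℝ) {ε : ℝ} (hε : 0 < ε) :
    ∀ᶠ L in atTop, ∀ M, 1 ≤ M →
      logProfile A κ M ≤ logProfile A κ L * Real.exp (ε * |M - L|) := by
  filter_upwards [eventually_abs_log_logProfile_sub_le A κ hε, eventually_gt_atTop 0]
    with L hlog hL M hM
  have hψL := logProfile_pos A κ hL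
  rw [← Real.log_le_log_iff (logProfile_pos A κ (one_pos.trans_le hM)) (by positivity),
    Real.log_mul hψL.ne' (Real.exp_pos _).ne', Real.log_exp]
  linarith [(le_abs_self _).trans (hlog M hM)]

lemma exists_eventually_abs_logProfile_sub_le (A κ : ℝ) {ε : ℝ} (hε : 0 < ε) :
    ∃ K, 0 ≤ K ∧ ∀ᶠ L in atTop, ∀ M, 1 ≤ M →
      |logProfile A κ M - logProfile A κ L| ≤
        K * logProfile A (κ - 1 / 2) L * Real.exp (ε * |M - L|) := by
  refine ⟨(|A| + 2 * |κ|) * (ε / 2)⁻¹, by positivity, ?_⟩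
  filter_upwards [eventually_abs_log_logProfile_sub_le A κ (half_pos hε), eventually_ge_atTop 1]
    with L hlog hL M hM
  have hL₀ : 0 < L := one_pos.trans_le hL
  have hψL := logProfile_pos A κ hL₀
  have hψM := logProfile_pos A κ (one_pos.trans_le hM)
  set r := Real.log (logProfile A κ M) - Real.log (logProfile A κ L)
  calc |logProfile A κ M - logProfile A κ L|
      = logProfile A κ L * |Real.exp r - 1| := by
        rw [← abs_of_pos hψL, ← abs_mul, abs_of_pos hψL, mul_sub, mul_one, Real.exp_sub,
          Real.exp_log hψM, Real.exp_log hψL, mul_div_cancel₀ _ hψL.ne']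
    _ ≤ logProfile A κ L * (|r| * Real.exp |r|) := by
        gcongr; exact abs_exp_sub_one_le_mul_exp_abs r
    _ ≤ logProfile A κ L * ((|A| + 2 * |κ|) *
          ((ε / 2)⁻¹ * Real.exp (ε / 2 * |M - L|) / √L) * Real.exp (ε / 2 * |M - L|)) := by
        gcongr
        · exact (abs_log_logProfile_sub_le A κ hL hM).trans
            (by gcongr; exact le_inv_mul_exp_mul (half_pos hε) _)
        · exact hlog M hM
    _ = (|A| + 2 * |κ|) * (ε / 2)⁻¹ * logProfile A (κ - 1 / 2) L * Real.exp (ε * |M - L|) := by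
        rw [sub_eq_add_neg κ, ← logProfile_mul_rpow A κ _ hL₀, Real.rpow_neg hL₀.le,
          ← Real.sqrt_eq_rpow, show ε * |M - L| = ε / 2 * |M - L| + ε / 2 * |M - L| by ring,
          Real.exp_add]
        ring

lemma exists_eventually_logProfile_le_of_le (A κ N : ℝ) {ε : ℝ} (hε : 0 < ε) :
    ∃ K, 0 ≤ K ∧ ∀ᶠ L in atTop, ∀ M ≤ N,
      logProfile A κ L ≤ K * logProfile A (κ - 1 / 2) L * Real.exp (ε * |M - L|) := by
  refine ⟨ε⁻¹ * Real.exp (ε * N), by positivity, ?_⟩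
  filter_upwards [eventually_ge_atTop 1] with L hL M hM
  have hL₀ : 0 < L := one_pos.trans_le hL
  have hψL := logProfile_pos A (κ - 1 / 2) hL₀
  calc logProfile A κ L = logProfile A (κ - 1 / 2) L * √L := by
        rw [Real.sqrt_eq_rpow, logProfile_mul_rpow A _ _ hL₀, sub_add_cancel]
    _ ≤ logProfile A (κ - 1 / 2) L * (ε⁻¹ * Real.exp (ε * (N + |M - L|))) := by
        gcongr
        calc √L ≤ L := Real.sqrt_le_self_iff.2 (.inr hL)
          _ ≤ N + |M - L| := by linarith [neg_abs_le (M - L)]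
          _ ≤ ε⁻¹ * Real.exp (ε * (N + |M - L|)) := le_inv_mul_exp_mul hε _
    _ = ε⁻¹ * Real.exp (ε * N) * logProfile A (κ - 1 / 2) L * Real.exp (ε * |M - L|) := by
        rw [mul_add, Real.exp_add]; ring

end LogProfile

section HestonProfile

open Topology Set

/-- The leading term `B x^a exp(A √(log (1/x))) (log (1/x))^κ` of the Heston density at zero. -/
noncomputable def hestonProfile (B a A κ x : ℝ) : ℝ :=
  B * x ^ a * Real.exp (A * Real.sqrt (Real.log x⁻¹)) * (Real.log x⁻¹) ^ κ

/-- `f(x) = B x^a exp(A √(log (1/x))) (log (1/x))^κ (1 + O((log (1/x))^{-1/2}))` as `x → 0`. -/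
def HasHestonAsymptotics (f : ℝ → ℝ) (B a A κ : ℝ) : Prop :=
  (fun x => f x - hestonProfile B a A κ x) =O[𝓝[>] 0]
    fun x => hestonProfile B a A κ x * (Real.log x⁻¹) ^ (-(1 : ℝ) / 2)

variable {B a A κ ε δ : ℝ} {U : ℝ → ℝ}

lemma hestonProfile_eq_mul_logProfile (B a A κ x : ℝ) :
    hestonProfile B a A κ x = B * x ^ a * logProfile A κ (Real.log x⁻¹) := by
  rw [hestonProfile, logProfile, mul_assoc]

lemma hestonProfile_eq_mul_one (B a A κ x : ℝ) :
    hestonProfile B a A κ x = B * hestonProfile 1 a A κ x := by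
  simp only [hestonProfile]; ring

lemma hestonProfile_div (B a A κ : ℝ) {x y : ℝ} (hx : 0 < x) (hy : 0 < y) :
    hestonProfile B a A κ (x / y) =
      B * x ^ a * y ^ (-a) * logProfile A κ (Real.log x⁻¹ + Real.log y) := by
  rw [hestonProfile_eq_mul_logProfile, Real.div_rpow hx.le hy.le, Real.rpow_neg hy.le, inv_div,
    Real.log_div hy.ne' hx.ne', Real.log_inv, neg_add_eq_sub]
  ring

lemma tendsto_log_inv_nhdsGT_zero : Tendsto (fun x : ℝ => Real.log x⁻¹) (𝓝[>] 0) atTop :=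
  Real.tendsto_log_atTop.comp tendsto_inv_nhdsGT_zero

lemma eventually_log_inv_pos : ∀ᶠ x : ℝ in 𝓝[>] 0, 0 < Real.log x⁻¹ :=
  tendsto_log_inv_nhdsGT_zero.eventually_gt_atTop 0

lemma eventually_hestonProfile_one_pos (a A κ : ℝ) :
    ∀ᶠ x in 𝓝[>] 0, 0 < hestonProfile 1 a A κ x := by
  filter_upwards [self_mem_nhdsWithin, eventually_log_inv_pos] with x (hx : 0 < x) hL
  rw [hestonProfile_eq_mul_logProfile, one_mul]
  exact mul_pos (Real.rpow_pos_of_pos hx a) (logProfile_pos A κ hL)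

lemma hestonProfile_mul_log_rpow_eventuallyEq (B a A κ : ℝ) :
    (fun x => hestonProfile B a A κ x * (Real.log x⁻¹) ^ (-(1 : ℝ) / 2)) =ᶠ[𝓝[>] 0]
      fun x => B * hestonProfile 1 a A (κ - 1 / 2) x := by
  filter_upwards [eventually_log_inv_pos] with x hL
  rw [hestonProfile_eq_mul_logProfile, hestonProfile_eq_mul_logProfile, mul_assoc _ _ (_ ^ _),
    logProfile_mul_rpow A κ _ hL]
  ring_nf

lemma hasHestonAsymptotics_iff (hB : B ≠ 0) :
    HasHestonAsymptotics U B a A κ ↔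
      (fun x => U x - hestonProfile B a A κ x) =O[𝓝[>] 0] hestonProfile 1 a A (κ - 1 / 2) := by
  rw [HasHestonAsymptotics, isBigO_congr .rfl (hestonProfile_mul_log_rpow_eventuallyEq B a A κ),
    isBigO_const_mul_right_iff hB]

lemma one_le_log_inv_add_log {x y : ℝ} (hx : 0 < x) (hy : 0 < y) (h : x / y ≤ Real.exp (-1)) :
    1 ≤ Real.log x⁻¹ + Real.log y := by
  have hlog := (Real.log_le_iff_le_exp (by positivity)).2 h
  rw [Real.log_div hx.ne' hy.ne'] at hlog
  rw [Real.log_inv]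
  linarith

lemma eventually_hestonProfile_div_le (a A κ : ℝ) (hε : 0 < ε) :
    ∀ᶠ x in 𝓝[>] 0, ∀ y, 0 < y → x / y ≤ Real.exp (-1) →
      hestonProfile 1 a A κ (x / y) ≤
        hestonProfile 1 a A κ x * (y ^ (-a) * Real.exp (ε * |Real.log y|)) := by
  filter_upwards [self_mem_nhdsWithin,
    tendsto_log_inv_nhdsGT_zero.eventually (eventually_logProfile_le A κ hε)]
    with x (hx : 0 < x) hψ y hy hxy
  have h := hψ _ (one_le_log_inv_add_log hx hy hxy)
  rw [add_sub_cancel_left] at h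
  calc hestonProfile 1 a A κ (x / y)
      = x ^ a * y ^ (-a) * logProfile A κ (Real.log x⁻¹ + Real.log y) := by
        rw [hestonProfile_div _ _ _ _ hx hy, one_mul]
    _ ≤ x ^ a * y ^ (-a) * (logProfile A κ (Real.log x⁻¹) * Real.exp (ε * |Real.log y|)) := by
        gcongr
    _ = _ := by rw [hestonProfile_eq_mul_logProfile]; ring

lemma exists_eventually_abs_hestonProfile_div_sub_le (B a A κ : ℝ) (hε : 0 < ε) :
    ∃ K, 0 ≤ K ∧ ∀ᶠ x in 𝓝[>] 0, ∀ y, 0 < y → x / y ≤ Real.exp (-1) →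
      |hestonProfile B a A κ (x / y) - hestonProfile B a A κ x * y ^ (-a)| ≤
        K * hestonProfile 1 a A (κ - 1 / 2) x * (y ^ (-a) * Real.exp (ε * |Real.log y|)) := by
  obtain ⟨K, hK, hψ⟩ := exists_eventually_abs_logProfile_sub_le A κ hε
  refine ⟨|B| * K, by positivity, ?_⟩
  filter_upwards [self_mem_nhdsWithin, tendsto_log_inv_nhdsGT_zero.eventually hψ]
    with x (hx : 0 < x) hψ y hy hxy
  have h := hψ _ (one_le_log_inv_add_log hx hy hxy)
  rw [add_sub_cancel_left] at h
  calc |hestonProfile B a A κ (x / y) - hestonProfile B a A κ x * y ^ (-a)|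
      = |B| * (x ^ a * y ^ (-a)) *
          |logProfile A κ (Real.log x⁻¹ + Real.log y) - logProfile A κ (Real.log x⁻¹)| := by
        rw [hestonProfile_div _ _ _ _ hx hy, hestonProfile_eq_mul_logProfile,
          ← abs_of_pos (by positivity : 0 < x ^ a * y ^ (-a)), ← abs_mul, ← abs_mul]
        ring_nf
    _ ≤ |B| * (x ^ a * y ^ (-a)) * (K * logProfile A (κ - 1 / 2) (Real.log x⁻¹) *
          Real.exp (ε * |Real.log y|)) := by gcongr
    _ = _ := by rw [hestonProfile_eq_mul_logProfile]; ring

lemma exists_eventually_abs_hestonProfile_mul_le (B a A κ : ℝ) (hδ : 0 < δ) (hε : 0 < ε) :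
    ∃ K, 0 ≤ K ∧ ∀ᶠ x in 𝓝[>] 0, ∀ y, 0 < y → δ < x / y →
      |hestonProfile B a A κ x * y ^ (-a)| ≤
        K * hestonProfile 1 a A (κ - 1 / 2) x * (y ^ (-a) * Real.exp (ε * |Real.log y|)) := by
  obtain ⟨K, hK, hψ⟩ := exists_eventually_logProfile_le_of_le A κ (-Real.log δ) hε
  refine ⟨|B| * K, by positivity, ?_⟩
  filter_upwards [self_mem_nhdsWithin, eventually_log_inv_pos,
    tendsto_log_inv_nhdsGT_zero.eventually hψ] with x (hx : 0 < x) hL hψ y hy hxy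
  have hM : Real.log x⁻¹ + Real.log y ≤ -Real.log δ := by
    have hlog := Real.log_lt_log hδ hxy
    rw [Real.log_div hx.ne' hy.ne'] at hlog
    rw [Real.log_inv]
    linarith
  have h := hψ _ hM
  rw [add_sub_cancel_left] at h
  calc |hestonProfile B a A κ x * y ^ (-a)|
      = |B| * (x ^ a * y ^ (-a)) * logProfile A κ (Real.log x⁻¹) := by
        rw [hestonProfile_eq_mul_logProfile, abs_mul, abs_mul, abs_mul,
          abs_of_pos (Real.rpow_pos_of_pos hx a), abs_of_pos (Real.rpow_pos_of_pos hy (-a)),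
          abs_of_pos (logProfile_pos A κ hL)]
        ring
    _ ≤ |B| * (x ^ a * y ^ (-a)) * (K * logProfile A (κ - 1 / 2) (Real.log x⁻¹) *
          Real.exp (ε * |Real.log y|)) := by gcongr
    _ = _ := by rw [hestonProfile_eq_mul_logProfile]; ring

lemma rpow_isBigO_hestonProfile (A κ : ℝ) {b : ℝ} (hab : a < b) :
    (fun x : ℝ => x ^ b) =O[𝓝[>] 0] hestonProfile 1 a A κ := by
  refine .of_bound (logProfile A κ 1)⁻¹ ?_
  filter_upwards [self_mem_nhdsWithin, eventually_hestonProfile_one_pos a A κ,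
    tendsto_log_inv_nhdsGT_zero.eventually_ge_atTop 1,
    tendsto_log_inv_nhdsGT_zero.eventually (eventually_logProfile_le A κ (sub_pos.2 hab))]
    with x (hx : 0 < x) hφ hL hψ
  have hψ₁ := logProfile_pos A κ one_pos
  have hψL := logProfile_pos A κ (one_pos.trans_le hL)
  rw [Real.norm_of_nonneg (by positivity), Real.norm_of_nonneg hφ.le, le_inv_mul_iff₀ hψ₁]
  calc logProfile A κ 1 * x ^ b
      ≤ logProfile A κ (Real.log x⁻¹) * Real.exp ((b - a) * |1 - Real.log x⁻¹|) * x ^ b := by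
        gcongr; exact hψ 1 le_rfl
    _ ≤ logProfile A κ (Real.log x⁻¹) * Real.exp ((b - a) * Real.log x⁻¹) * x ^ b := by
        rw [abs_sub_comm, abs_of_nonneg (sub_nonneg.2 hL)]
        gcongr
        exact sub_le_self _ zero_le_one
    _ = hestonProfile 1 a A κ x := by
        rw [hestonProfile_eq_mul_logProfile, Real.log_inv, mul_neg, ← neg_mul, neg_sub,
          mul_comm (a - b), ← Real.rpow_def_of_pos hx, mul_assoc, ← Real.rpow_add hx,
          sub_add_cancel]
        ring

lemma rpow_mul_exp_mul_abs_log_le (s ε : ℝ) {y : ℝ} (hy : 0 < y) :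
    y ^ s * Real.exp (ε * |Real.log y|) ≤ y ^ (s + ε) + y ^ (s - ε) := by
  rw [sub_eq_add_neg, Real.rpow_add hy, Real.rpow_add hy, ← mul_add, Real.rpow_def_of_pos hy ε,
    Real.rpow_def_of_pos hy (-ε)]
  gcongr
  rcases abs_choice (Real.log y) with h | h <;> rw [h]
  · exact le_add_of_le_of_nonneg (by rw [mul_comm]) (Real.exp_pos _).le
  · exact le_add_of_nonneg_of_le (Real.exp_pos _).le (by ring_nf; rfl)

lemma exists_eventually_abs_comp_div_sub_le
    (hU : (fun x => U x - hestonProfile B a A κ x) =O[𝓝[>] 0] hestonProfile 1 a A (κ - 1 / 2))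
    (hε : 0 < ε) :
    ∃ δ, 0 < δ ∧ ∃ K, 0 ≤ K ∧ ∀ᶠ x in 𝓝[>] 0, ∀ y, 0 < y →
      |U (x / y) - hestonProfile B a A κ x * y ^ (-a)| ≤
        K * hestonProfile 1 a A (κ - 1 / 2) x * (y ^ (-a) * Real.exp (ε * |Real.log y|)) +
          (Ioi δ).indicator (fun z => |U z|) (x / y) := by
  obtain ⟨K₁, hK₁, hU⟩ := hU.exists_nonneg
  obtain ⟨δ₀, hδ₀, hUδ₀⟩ := mem_nhdsGT_iff_exists_Ioc_subset.1
    (hU.bound.and (eventually_hestonProfile_one_pos a A (κ - 1 / 2)))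
  obtain ⟨δ, hδ, hδδ₀, hδe⟩ : ∃ δ, 0 < δ ∧ δ ≤ δ₀ ∧ δ ≤ Real.exp (-1) :=
    ⟨min δ₀ (Real.exp (-1)), lt_min hδ₀ (Real.exp_pos _), min_le_left _ _, min_le_right _ _⟩
  obtain ⟨K₂, hK₂, hnear⟩ := exists_eventually_abs_hestonProfile_div_sub_le B a A κ hε
  obtain ⟨K₃, hK₃, hfar⟩ := exists_eventually_abs_hestonProfile_mul_le B a A κ hδ hε
  refine ⟨δ, hδ, K₁ + K₂ + K₃, by positivity, ?_⟩
  filter_upwards [self_mem_nhdsWithin, eventually_hestonProfile_one_pos a A (κ - 1 / 2),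
    eventually_hestonProfile_div_le a A (κ - 1 / 2) hε, hnear, hfar]
    with x (hx : 0 < x) hφ hpotter hnear hfar y hy
  set w := y ^ (-a) * Real.exp (ε * |Real.log y|)
  have hφw : 0 ≤ hestonProfile 1 a A (κ - 1 / 2) x * w := by positivity
  rcases le_or_gt (x / y) δ with hxy | hxy
  · obtain ⟨hUxy, hφxy⟩ := hUδ₀ ⟨by positivity, hxy.trans hδδ₀⟩
    rw [Real.norm_of_nonneg hφxy.le] at hUxy
    rw [indicator_of_notMem (notMem_Ioi.2 hxy), add_zero]
    calc |U (x / y) - hestonProfile B a A κ x * y ^ (-a)|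
        ≤ |U (x / y) - hestonProfile B a A κ (x / y)| +
            |hestonProfile B a A κ (x / y) - hestonProfile B a A κ x * y ^ (-a)| :=
          abs_sub_le _ _ _
      _ ≤ K₁ * (hestonProfile 1 a A (κ - 1 / 2) x * w) +
            K₂ * hestonProfile 1 a A (κ - 1 / 2) x * w := by
          gcongr
          · exact hUxy.trans (by gcongr; exact hpotter y hy (hxy.trans hδe))
          · exact hnear y hy (hxy.trans hδe)
      _ ≤ (K₁ + K₂ + K₃) * hestonProfile 1 a A (κ - 1 / 2) x * w := by nlinarith
  · rw [indicator_of_mem (mem_Ioi.2 hxy)]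
    calc |U (x / y) - hestonProfile B a A κ x * y ^ (-a)|
        ≤ |U (x / y)| + |hestonProfile B a A κ x * y ^ (-a)| := abs_sub _ _
      _ ≤ |U (x / y)| + K₃ * hestonProfile 1 a A (κ - 1 / 2) x * w := by
          gcongr; exact hfar y hy hxy
      _ ≤ (K₁ + K₂ + K₃) * hestonProfile 1 a A (κ - 1 / 2) x * w + |U (x / y)| := by nlinarith

end HestonProfile

/-! ### An Abelian theorem for Mellin convolutions -/

section MellinConvolution

open Topology Set

lemma integrableOn_Ioi_comp_div_div_iff (f : ℝ → ℝ) {x : ℝ} (hx : 0 < x) :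
    IntegrableOn (fun y => f (x / y) / y) (Ioi 0) ↔ IntegrableOn (fun z => f z / z) (Ioi 0) := by
  have hscale := integrableOn_Ioi_comp_mul_left_iff (fun z => f z / z) 0 hx
  have hinv := integrableOn_Ioi_comp_rpow_iff' (fun z => f (x * z) / (x * z))
    (neg_ne_zero.2 one_ne_zero : (-1 : ℝ) ≠ 0)
  have hcongr : EqOn (fun y : ℝ => y ^ ((-1 : ℝ) - 1) •
      (f (x * y ^ (-1 : ℝ)) / (x * y ^ (-1 : ℝ)))) (fun y => x⁻¹ * (f (x / y) / y)) (Ioi 0) :=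
    fun y (hy : 0 < y) => by
      simp only [smul_eq_mul, Real.rpow_sub_one hy.ne', Real.rpow_neg_one, ← div_eq_mul_inv]
      field_simp
  rw [mul_zero] at hscale
  rw [← hscale, ← hinv, integrableOn_congr_fun hcongr measurableSet_Ioi]
  exact (integrable_const_mul_iff (inv_ne_zero hx.ne').isUnit _).symm

lemma integral_Ioi_comp_div_div (f : ℝ → ℝ) {x : ℝ} (hx : 0 < x) :
    ∫ y in Ioi (0 : ℝ), f (x / y) / y = ∫ z in Ioi (0 : ℝ), f z / z := by
  have hscale := integral_comp_mul_left_Ioi (fun z => f z / z) 0 hx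
  rw [mul_zero, smul_eq_mul, eq_inv_mul_iff_mul_eq₀ hx.ne'] at hscale
  rw [← hscale, ← integral_comp_rpow_Ioi _ (neg_ne_zero.2 one_ne_zero : (-1 : ℝ) ≠ 0),
    ← integral_const_mul]
  refine setIntegral_congr_fun measurableSet_Ioi fun y (hy : 0 < y) => ?_
  simp only [smul_eq_mul, abs_neg, abs_one, Real.rpow_sub_one hy.ne', Real.rpow_neg_one]
  field_simp

variable {U H : ℝ → ℝ} {B a A κ b c s ε δ : ℝ}

lemma integrableOn_rpow_mul (hH : LocallyIntegrableOn H (Ioi 0))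
    (hH_top : H =O[atTop] fun y => y ^ (-c)) (hH_zero : H =O[𝓝[>] 0] fun y => y ^ b)
    (hc : s < c) (hb : -b < s) : IntegrableOn (fun y => y ^ (s - 1) * H y) (Ioi 0) :=
  mellin_convergent_of_isBigO_scalar hH hH_top hc (by simpa only [neg_neg] using hH_zero) hb

lemma integrableOn_rpow_mul_exp_mul_abs_log (hH : LocallyIntegrableOn H (Ioi 0))
    (hH_top : H =O[atTop] fun y => y ^ (-c)) (hH_zero : H =O[𝓝[>] 0] fun y => y ^ b)
    (hε : 0 ≤ ε) (hc : s + ε < c) (hb : -b < s - ε) :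
    IntegrableOn (fun y => y ^ s * Real.exp (ε * |Real.log y|) * (|H y| / y)) (Ioi 0) := by
  have hplus := integrableOn_rpow_mul hH hH_top hH_zero hc (by linarith)
  have hminus := integrableOn_rpow_mul hH hH_top hH_zero (by linarith) hb
  refine (hplus.norm.add hminus.norm).mono' ?_
    ((ae_restrict_iff' measurableSet_Ioi).2 (.of_forall fun y (hy : 0 < y) => ?_))
  · have hw : Measurable fun y : ℝ => y ^ s * Real.exp (ε * |Real.log y|) := by fun_prop
    exact (hw.aemeasurable.mul
      (hH.aestronglyMeasurable.aemeasurable.norm.div aemeasurable_id)).aestronglyMeasurable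
  · rw [Real.norm_of_nonneg (by positivity)]
    calc y ^ s * Real.exp (ε * |Real.log y|) * (|H y| / y)
        ≤ (y ^ (s + ε) + y ^ (s - ε)) * (|H y| / y) := by
          gcongr; exact rpow_mul_exp_mul_abs_log_le s ε hy
      _ = ‖y ^ (s + ε - 1) * H y‖ + ‖y ^ (s - ε - 1) * H y‖ := by
          simp only [norm_mul, Real.norm_eq_abs, abs_of_nonneg (Real.rpow_nonneg hy.le _)]
          rw [Real.rpow_sub_one hy.ne', Real.rpow_sub_one hy.ne']
          ring

lemma exists_eventually_abs_le_of_lt_div (hH_zero : H =O[𝓝[>] 0] fun y => y ^ b) (hδ : 0 < δ) :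
    ∃ C, 0 ≤ C ∧ ∀ᶠ x in 𝓝[>] 0, ∀ y, 0 < y → δ < x / y → |H y| ≤ C * y ^ b := by
  obtain ⟨C, hC, hH⟩ := hH_zero.exists_nonneg
  obtain ⟨r, hr, hHr⟩ := mem_nhdsGT_iff_exists_Ioc_subset.1 hH.bound
  refine ⟨C, hC, ?_⟩
  filter_upwards [Ioc_mem_nhdsGT (mul_pos hδ hr)] with x hx y hy hxy
  have hyr : y ≤ r := le_of_mul_le_mul_left (((lt_div_iff₀ hy).1 hxy).le.trans hx.2) hδ
  simpa only [mem_ofPred_eq, Real.norm_eq_abs, abs_of_nonneg (Real.rpow_nonneg hy.le b)]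
    using hHr ⟨hy, hyr⟩

lemma integrableOn_indicator_mul_rpow_div (hU : IntegrableOn U (Ioi δ)) (hδ : 0 < δ)
    (hb : -1 ≤ b) :
    IntegrableOn (fun z => (Ioi δ).indicator (fun z => |U z| * z ^ (-b)) z / z) (Ioi 0) := by
  have hindicator : (fun z => (Ioi δ).indicator (fun z => |U z| * z ^ (-b)) z / z) =
      (Ioi δ).indicator fun z => z ^ (-b - 1) * |U z| := by
    funext z
    by_cases hz : z ∈ Ioi δ
    · rw [indicator_of_mem hz, indicator_of_mem hz, Real.rpow_sub_one (hδ.trans hz).ne']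
      ring
    · rw [indicator_of_notMem hz, indicator_of_notMem hz, zero_div]
  rw [hindicator]
  refine Integrable.integrableOn ((integrable_indicator_iff measurableSet_Ioi).2 ?_)
  refine hU.norm.bdd_mul (c := δ ^ (-b - 1)) (by fun_prop)
    ((ae_restrict_iff' measurableSet_Ioi).2 (.of_forall fun z hz => ?_))
  rw [Real.norm_of_nonneg (Real.rpow_nonneg (hδ.trans hz).le _)]
  exact Real.rpow_le_rpow_of_nonpos hδ (le_of_lt hz) (by linarith)

lemma exists_eventually_indicator_mul_le (U : ℝ → ℝ) (hδ : 0 < δ)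
    (hH_zero : H =O[𝓝[>] 0] fun y => y ^ b) :
    ∃ C, 0 ≤ C ∧ ∀ᶠ x in 𝓝[>] 0, ∀ y, 0 < y →
      (Ioi δ).indicator (fun z => |U z|) (x / y) * (|H y| / y) ≤
        C * x ^ b * ((Ioi δ).indicator (fun z => |U z| * z ^ (-b)) (x / y) / y) := by
  obtain ⟨C, hC, hHC⟩ := exists_eventually_abs_le_of_lt_div hH_zero hδ
  refine ⟨C, hC, ?_⟩
  filter_upwards [self_mem_nhdsWithin, hHC] with x (hx : 0 < x) hHC y hy
  by_cases hxy : x / y ∈ Ioi δ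
  · simp only [indicator_of_mem hxy]
    calc |U (x / y)| * (|H y| / y) ≤ |U (x / y)| * (C * y ^ b / y) := by
          gcongr; exact hHC y hy hxy
      _ = C * x ^ b * (|U (x / y)| * (x / y) ^ (-b) / y) := by
          rw [Real.rpow_neg (by positivity), Real.div_rpow hx.le hy.le]
          field_simp
  · simp only [indicator_of_notMem hxy, zero_mul, zero_div, mul_zero, le_refl]

lemma exists_eventually_integral_indicator_le (hU_meas : Measurable U)
    (hU : IntegrableOn U (Ioi δ)) (hδ : 0 < δ) (hH : AEMeasurable H (volume.restrict (Ioi 0)))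
    (hH_zero : H =O[𝓝[>] 0] fun y => y ^ b) (hb : -1 ≤ b) :
    ∃ C, 0 ≤ C ∧ ∀ᶠ x in 𝓝[>] 0,
      IntegrableOn (fun y => (Ioi δ).indicator (fun z => |U z|) (x / y) * (|H y| / y)) (Ioi 0) ∧
      ∫ y in Ioi (0 : ℝ), (Ioi δ).indicator (fun z => |U z|) (x / y) * (|H y| / y) ≤
        C * x ^ b := by
  obtain ⟨C, hC, hle⟩ := exists_eventually_indicator_mul_le U hδ hH_zero
  set f := (Ioi δ).indicator fun z => |U z| * z ^ (-b)
  have hf := integrableOn_indicator_mul_rpow_div hU hδ hb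
  have hf₀ : 0 ≤ ∫ z in Ioi (0 : ℝ), f z / z :=
    setIntegral_nonneg measurableSet_Ioi fun z (hz : 0 < z) =>
      div_nonneg (indicator_apply_nonneg fun _ => by positivity) hz.le
  refine ⟨C * ∫ z in Ioi (0 : ℝ), f z / z, by positivity, ?_⟩
  filter_upwards [self_mem_nhdsWithin, hle] with x (hx : 0 < x) hle
  have hmajorant : IntegrableOn (fun y => C * x ^ b * (f (x / y) / y)) (Ioi 0) :=
    ((integrableOn_Ioi_comp_div_div_iff f hx).2 hf).const_mul _
  have hU_comp : Measurable fun y => (Ioi δ).indicator (fun z => |U z|) (x / y) :=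
    (hU_meas.norm.indicator measurableSet_Ioi).comp (measurable_const.div measurable_id)
  have hint : IntegrableOn
      (fun y => (Ioi δ).indicator (fun z => |U z|) (x / y) * (|H y| / y)) (Ioi 0) := by
    refine hmajorant.mono'
      (hU_comp.aemeasurable.mul (hH.norm.div aemeasurable_id)).aestronglyMeasurable
      ((ae_restrict_iff' measurableSet_Ioi).2 (.of_forall fun y (hy : 0 < y) => ?_))
    have hindicator : 0 ≤ (Ioi δ).indicator (fun z => |U z|) (x / y) :=
      indicator_nonneg (fun _ _ => abs_nonneg _) _
    rw [Real.norm_of_nonneg (by positivity)]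
    exact hle y hy
  refine ⟨hint, (setIntegral_mono_on hint hmajorant measurableSet_Ioi hle).trans_eq ?_⟩
  rw [integral_const_mul, integral_Ioi_comp_div_div f hx]
  ring

lemma abs_mellinConv_sub_le (hU_meas : Measurable U)
    (hH : AEMeasurable H (volume.restrict (Ioi 0)))
    (hm : IntegrableOn (fun y => y ^ (-a - 1) * H y) (Ioi 0)) {x V : ℝ} {g : ℝ → ℝ}
    (hg : IntegrableOn (fun y => g y * (|H y| / y)) (Ioi 0))
    (hUg : ∀ y, 0 < y → |U (x / y) - V * y ^ (-a)| ≤ g y) :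
    |mellinConv U H x - V * ∫ y in Ioi (0 : ℝ), y ^ (-a - 1) * H y| ≤
      ∫ y in Ioi (0 : ℝ), g y * (|H y| / y) := by
  have hD_meas : AEMeasurable (fun y => (U (x / y) - V * y ^ (-a)) * (H y / y))
      (volume.restrict (Ioi 0)) :=
    ((hU_meas.comp (measurable_const.div measurable_id)).sub (by fun_prop)).aemeasurable.mul
      (hH.div aemeasurable_id)
  have hD_le : ∀ᵐ y ∂volume.restrict (Ioi 0),
      ‖(U (x / y) - V * y ^ (-a)) * (H y / y)‖ ≤ g y * (|H y| / y) :=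
    (ae_restrict_iff' measurableSet_Ioi).2 <| .of_forall fun y (hy : 0 < y) => by
      rw [norm_mul, norm_div, Real.norm_eq_abs, Real.norm_eq_abs, Real.norm_of_nonneg hy.le]
      gcongr
      exact hUg y hy
  have hsplit : mellinConv U H x = ∫ y in Ioi (0 : ℝ),
      ((U (x / y) - V * y ^ (-a)) * (H y / y) + V * (y ^ (-a - 1) * H y)) :=
    setIntegral_congr_fun measurableSet_Ioi fun y (hy : 0 < y) => by
      simp only [Real.rpow_sub_one hy.ne']
      ring
  rw [hsplit, integral_add (hg.mono' hD_meas.aestronglyMeasurable hD_le) (hm.const_mul V),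
    integral_const_mul, add_sub_cancel_right]
  exact norm_integral_le_of_norm_le hg hD_le

theorem mellinConv_sub_hestonProfile_isBigO (hU_meas : Measurable U)
    (hU_int : ∀ δ, 0 < δ → IntegrableOn U (Ioi δ))
    (hU : (fun x => U x - hestonProfile B a A κ x) =O[𝓝[>] 0] hestonProfile 1 a A (κ - 1 / 2))
    (hH : LocallyIntegrableOn H (Ioi 0)) (hH_top : H =O[atTop] fun y => y ^ (-c))
    (hH_zero : H =O[𝓝[>] 0] fun y => y ^ b) (hc : -a < c) (hab : a < b) (hb : -1 ≤ b) :
    (fun x => mellinConv U H x -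
        hestonProfile ((∫ y in Ioi (0 : ℝ), y ^ (-a - 1) * H y) * B) a A κ x) =O[𝓝[>] 0]
      hestonProfile 1 a A (κ - 1 / 2) := by
  obtain ⟨ε, hε, hεmin⟩ := exists_between (lt_min (sub_pos.2 hab) (sub_pos.2 hc))
  obtain ⟨hεb, hεc⟩ := lt_min_iff.1 hεmin
  have hH_meas : AEMeasurable H (volume.restrict (Ioi 0)) := hH.aestronglyMeasurable.aemeasurable
  have hm := integrableOn_rpow_mul hH hH_top hH_zero hc (by linarith)
  have hJ := integrableOn_rpow_mul_exp_mul_abs_log hH hH_top hH_zero hε.le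
    (s := -a) (by linarith) (by linarith)
  set J := ∫ y in Ioi (0 : ℝ), y ^ (-a) * Real.exp (ε * |Real.log y|) * (|H y| / y)
  obtain ⟨δ, hδ, K, hK, hpointwise⟩ := exists_eventually_abs_comp_div_sub_le hU hε
  obtain ⟨C, hC, hfar⟩ :=
    exists_eventually_integral_indicator_le hU_meas (hU_int δ hδ) hδ hH_meas hH_zero hb
  have hbound : (fun x => mellinConv U H x -
        hestonProfile ((∫ y in Ioi (0 : ℝ), y ^ (-a - 1) * H y) * B) a A κ x) =O[𝓝[>] 0]
      fun x => K * J * hestonProfile 1 a A (κ - 1 / 2) x + C * x ^ b := by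
    refine .of_bound' ?_
    filter_upwards [hpointwise, hfar] with x hpointwise ⟨hfar_int, hfar_le⟩
    have hnear_int := hJ.const_mul (K * hestonProfile 1 a A (κ - 1 / 2) x)
    set g : ℝ → ℝ := fun y => K * hestonProfile 1 a A (κ - 1 / 2) x *
      (y ^ (-a) * Real.exp (ε * |Real.log y|)) + (Ioi δ).indicator (fun z => |U z|) (x / y)
    have hg : (fun y => g y * (|H y| / y)) = fun y => K * hestonProfile 1 a A (κ - 1 / 2) x *
        (y ^ (-a) * Real.exp (ε * |Real.log y|) * (|H y| / y)) +
          (Ioi δ).indicator (fun z => |U z|) (x / y) * (|H y| / y) := by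
      funext y; ring
    have hdiff := abs_mellinConv_sub_le hU_meas hH_meas hm
      (hg ▸ hnear_int.add hfar_int) hpointwise
    rw [hg, integral_add hnear_int hfar_int, integral_const_mul] at hdiff
    rw [hestonProfile_eq_mul_one, mul_assoc, ← hestonProfile_eq_mul_one, mul_comm, Real.norm_eq_abs]
    refine (hdiff.trans ?_).trans (le_abs_self _)
    rw [mul_right_comm K]
    gcongr
  exact hbound.trans (((isBigO_refl _ _).const_mul_left _).add
    ((rpow_isBigO_hestonProfile A (κ - 1 / 2) hab).const_mul_left _))

end MellinConvolution

theorem density_asymptotics_heston_dominates_at_zero_general {lam t η₁ η₂ p q : ℝ} {U : ℝ → ℝ}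
    {B a A κ : ℝ} (hlt : 0 ≤ lam * t) (hη₁ : 0 < η₁) (hη₂ : 0 < η₂) (hp : p ∈ Set.Icc 0 1)
    (hq : q ∈ Set.Icc 0 1) (hB : B ≠ 0) (hη₁a : -η₁ - 1 < a) (haη₂ : a < η₂ - 1)
    (hU_meas : Measurable U) (hU_int : ∀ δ, 0 < δ → IntegrableOn U (Set.Ioi δ))
    (hU : HasHestonAsymptotics U B a A κ) :
    IntegrableOn (fun x => x ^ (-a - 1) * Hfun lam t η₁ η₂ p q x) (Set.Ioi 0) ∧
      HasHestonAsymptotics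
        (fun x => Real.exp (-(lam * t)) * U x + mellinConv U (Hfun lam t η₁ η₂ p q) x)
        ((Real.exp (-(lam * t)) +
          ∫ y in Set.Ioi (0 : ℝ), y ^ (-a - 1) * Hfun lam t η₁ η₂ p q y) * B) a A κ := by
  obtain ⟨b, hab, hbη₂⟩ := exists_between (max_lt haη₂ (by linarith : -1 < η₂ - 1))
  obtain ⟨c, hac, hcη₁⟩ := exists_between (by linarith : -a < η₁ + 1)
  obtain ⟨hab, hb⟩ := max_lt_iff.1 hab
  have hH := locallyIntegrableOn_Hfun hlt hη₁ hη₂ hp hq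
  have hH_top := Hfun_isBigO_atTop hlt hη₁ hη₂.le hp hq hcη₁
  have hH_zero := Hfun_isBigO_zero hlt hη₁.le hη₂ hp hq hbη₂
  refine ⟨integrableOn_rpow_mul hH hH_top hH_zero hac (by linarith), ?_⟩
  set m := ∫ y in Set.Ioi (0 : ℝ), y ^ (-a - 1) * Hfun lam t η₁ η₂ p q y
  have hm : 0 ≤ m := setIntegral_nonneg measurableSet_Ioi fun y (hy : 0 < y) =>
    mul_nonneg (by positivity) (Hfun_nonneg hlt hη₁.le hη₂.le hp.1 hq.1 hy)
  rw [hasHestonAsymptotics_iff hB] at hU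
  rw [hasHestonAsymptotics_iff (mul_ne_zero (by positivity) hB)]
  refine ((hU.const_mul_left (Real.exp (-(lam * t)))).add
    (mellinConv_sub_hestonProfile_isBigO hU_meas hU_int hU hH hH_top hH_zero hac hab
      hb.le)).congr_left fun x => ?_
  simp only [hestonProfile_eq_mul_one (_ * B), hestonProfile_eq_mul_one B]
  ring

/-- Theorem: density asymptotics at zero when the Heston part
dominates, `Ã₃ < η₂ − 1`.  Let `U` be a probability density on `(0,∞)` with the
Heston-type asymptotics at infinity and zero, and let
`D(x) = e^{−λt} U(x) + (U ⋆_M H(t,·))(x)`.  Then the moment `m_{−Ã₃−1}(H(t,·))` is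
finite and
`D(x) = [e^{−λt} + m_{−Ã₃−1}(H(t,·))] B̃₁ x^{Ã₃} exp{Ã₂√(log(1/x))} (log(1/x))^κ`
`· (1 + O((log(1/x))^{−1/2}))` as `x → 0`. -/
theorem density_asymptotics_heston_dominates_at_zero
    (t lam η₁ η₂ p q : ℝ) (U : ℝ → ℝ) (B₁ Bt₁ A₂ At₂ A₃ At₃ κ : ℝ)
    (ht : 0 < t) (hlam : 0 < lam) (hη₁ : 1 < η₁) (hη₂ : 0 < η₂)
    (hp : 0 < p) (hq : 0 < q) (hpq : p + q = 1)
    (hB₁ : 0 < B₁) (hBt₁ : 0 < Bt₁) (hA₃ : 2 < A₃) (hAt₃ : -1 < At₃)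
    (hdom : At₃ < η₂ - 1)
    (hU_meas : Measurable U) (hU_nonneg : ∀ x, 0 ≤ U x)
    (hU_prob : (∫ x in Set.Ioi (0:ℝ), U x) = 1)
    -- `U(x) = B₁ x^{−A₃} exp{A₂√(log x)} (log x)^κ (1 + O((log x)^{−1/2}))` as `x → ∞`
    (hU_infty : (fun x => U x -
        B₁ * x ^ (-A₃) * Real.exp (A₂ * Real.sqrt (Real.log x)) * (Real.log x) ^ κ)
      =O[atTop] (fun x =>
        B₁ * x ^ (-A₃) * Real.exp (A₂ * Real.sqrt (Real.log x)) * (Real.log x) ^ κ *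
          (Real.log x) ^ (-(1:ℝ)/2)))
    -- `U(x) = B̃₁ x^{Ã₃} exp{Ã₂√(log(1/x))} (log(1/x))^κ (1 + O((log(1/x))^{−1/2}))` as `x → 0`
    (hU_zero : (fun x => U x -
        Bt₁ * x ^ At₃ * Real.exp (At₂ * Real.sqrt (Real.log x⁻¹)) * (Real.log x⁻¹) ^ κ)
      =O[nhdsWithin 0 (Set.Ioi 0)] (fun x =>
        Bt₁ * x ^ At₃ * Real.exp (At₂ * Real.sqrt (Real.log x⁻¹)) * (Real.log x⁻¹) ^ κ *
          (Real.log x⁻¹) ^ (-(1:ℝ)/2))) :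
    MeasureTheory.IntegrableOn
      (fun x => x ^ (-At₃ - 1) * Hfun lam t η₁ η₂ p q x) (Set.Ioi 0) ∧
    (fun x => (Real.exp (-(lam * t)) * U x +
        mellinConv U (Hfun lam t η₁ η₂ p q) x) -
        (Real.exp (-(lam * t)) +
            ∫ y in Set.Ioi (0:ℝ), y ^ (-At₃ - 1) * Hfun lam t η₁ η₂ p q y) *
          Bt₁ * x ^ At₃ * Real.exp (At₂ * Real.sqrt (Real.log x⁻¹)) *
          (Real.log x⁻¹) ^ κ)
      =O[nhdsWithin 0 (Set.Ioi 0)]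
      (fun x =>
        (Real.exp (-(lam * t)) +
            ∫ y in Set.Ioi (0:ℝ), y ^ (-At₃ - 1) * Hfun lam t η₁ η₂ p q y) *
          Bt₁ * x ^ At₃ * Real.exp (At₂ * Real.sqrt (Real.log x⁻¹)) *
          (Real.log x⁻¹) ^ κ * (Real.log x⁻¹) ^ (-(1:ℝ)/2)) := by
  have hU_int : IntegrableOn U (Set.Ioi 0) := .of_integral_ne_zero (hU_prob ▸ one_ne_zero)
  exact density_asymptotics_heston_dominates_at_zero_general (mul_pos hlam ht).le
    (one_pos.trans hη₁) hη₂ ⟨hp.le, by linarith⟩ ⟨hq.le, by linarith⟩ hBt₁.ne' (by linarith) hdom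
    hU_meas (fun δ hδ => hU_int.mono_set (Set.Ioi_subset_Ioi hδ.le)) hU_zero
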